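/- Let η_k ~ Gamma(k/2) and η_{k+1} ~ Gamma((k+1)/2) be independent and R_k = η_k/η_{k+1}. Then √k (R_k - 1) converges in distribution, as k → ∞, to a centered normal distribution with variance 4. -/

import Mathlib

open MeasureTheory ProbabilityTheory Real Set Filter

/-!
Away from the null set `η' k = 0`,

  `√k (η / η' - 1) = (2 / √k) (η - η') · ((2 / k) η')⁻¹`,

so the result follows from Slutsky's theorem once the first factor is shown to converge in
distribution to `N(0, 4)` (`tendstoInDistribution_difference`) and the second one in probability
to `1` (`tendstoInMeasure_inv_scaled`).

For the first factor, Lévy's continuity theorem is applied. The `Gamma(a, 1)` law has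
characteristic function `(1 - is)^(-a)` (`charFun_gammaMeasure_one`, by analytic continuation of
the moment generating function `(1 - t)^(-a)`), so with `s = 2t / √k` and `a = k / 2` the
characteristic function of `(2 / √k) (η - η')` at `t` is

  `(1 - is)^(-a) (1 + is)^(-a - 1/2) = (1 + s²)^(-a) (1 + is)^(-1/2)`,

where `(1 + 4t² / k)^(-k/2) → exp (-2t²)` and the last factor tends to `1`.

For the second factor, the first two Gamma moments give `E[((2 / k) η' - 1)²] = (2k + 3) / k²`, and
Markov's inequality gives convergence in probability to `1`, which passes to the inverse.
-/

lemma integral_gammaMeasure_one {a : ℝ} (ha : 0 < a) (f : ℝ → ℝ) :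
    ∫ x, f x ∂gammaMeasure a 1
      = (Gamma a)⁻¹ * ∫ x in Ioi 0, x ^ (a - 1) * exp (-x) * f x := by
  have hmeas : Measurable (gammaPDF a 1) := (measurable_gammaPDFReal a 1).ennreal_ofReal
  rw [gammaMeasure, integral_withDensity_eq_integral_toReal_smul hmeas
    (ae_of_all _ fun x => ENNReal.ofReal_lt_top), ← integral_const_mul,
    ← integral_Ici_eq_integral_Ioi, ← integral_indicator measurableSet_Ici]
  refine integral_congr_ae (ae_of_all _ fun x => ?_)
  simp only [gammaPDF, smul_eq_mul]
  rw [ENNReal.toReal_ofReal (gammaPDFReal_nonneg ha one_pos x)]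
  by_cases hx : 0 ≤ x
  · rw [indicator_of_mem (mem_Ici.2 hx), gammaPDFReal, if_pos hx]
    simp only [one_rpow, one_mul, one_div]
    ring
  · rw [indicator_of_notMem (by simpa using hx), gammaPDFReal, if_neg hx, zero_mul]

lemma integral_pow_gammaMeasure_one {a : ℝ} (ha : 0 < a) (n : ℕ) :
    ∫ x, x ^ n ∂gammaMeasure a 1 = Gamma (a + n) / Gamma a := by
  have h : ∫ x in Ioi 0, x ^ (a - 1) * exp (-x) * x ^ n = Gamma (a + n) := by
    rw [Gamma_eq_integral (by positivity)]
    refine setIntegral_congr_fun measurableSet_Ioi fun x hx => ?_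
    have hx : 0 < x := hx
    rw [show a + n - 1 = (a - 1) + n by ring, rpow_add hx, rpow_natCast]
    ring
  rw [integral_gammaMeasure_one ha, h]
  ring

lemma integrable_pow_gammaMeasure_one {a : ℝ} (ha : 0 < a) (n : ℕ) :
    Integrable (fun x : ℝ => x ^ n) (gammaMeasure a 1) := by
  -- the integral of a non-integrable function is `0` by convention, and this one is positive
  refine not_imp_comm.1 integral_undef ?_
  rw [integral_pow_gammaMeasure_one ha]
  have := Gamma_pos_of_pos ha
  have := Gamma_pos_of_pos (show 0 < a + n by positivity)
  positivity

lemma mgf_gammaMeasure_one {a t : ℝ} (ha : 0 < a) (ht : t < 1) :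
    mgf id (gammaMeasure a 1) t = (1 - t) ^ (-a) := by
  have h : ∫ x in Ioi 0, x ^ (a - 1) * exp (-x) * exp (t * x)
      = (1 / (1 - t)) ^ a * Gamma a := by
    rw [← integral_rpow_mul_exp_neg_mul_Ioi ha (sub_pos.2 ht)]
    refine setIntegral_congr_fun measurableSet_Ioi fun x _ => ?_
    rw [mul_assoc, ← exp_add]
    congr 2
    ring
  have := (Gamma_pos_of_pos ha).ne'
  simp only [mgf, id]
  rw [integral_gammaMeasure_one ha, h, one_div, inv_rpow (sub_pos.2 ht).le,
    rpow_neg (sub_pos.2 ht).le]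
  field_simp

lemma Iio_subset_integrableExpSet_gammaMeasure {a : ℝ} (ha : 0 < a) :
    Iio 1 ⊆ integrableExpSet id (gammaMeasure a 1) := by
  intro t ht
  -- as for the moments, a nonzero integral forces integrability
  refine not_imp_comm.1 integral_undef ?_
  have := mgf_gammaMeasure_one ha ht
  rw [mgf] at this
  rw [this]
  exact (rpow_pos_of_pos (sub_pos.2 ht) _).ne'

/-- The complex moment generating function and `z ↦ (1 - z)^(-a)` are both analytic on the half-plane
`re z < 1` and agree on its real points, hence they agree at `t * I`. -/
lemma charFun_gammaMeasure_one {a : ℝ} (ha : 0 < a) (t : ℝ) :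
    charFun (gammaMeasure a 1) t = (1 - t * Complex.I) ^ (-(a : ℂ)) := by
  let U : Set ℂ := {z | z.re < 1}
  have hUo : IsOpen U := isOpen_lt Complex.continuous_re continuous_const
  have hUc : IsPreconnected U := (convex_halfSpace_re_lt 1).isPreconnected
  have hU : ∀ z ∈ U, 1 - z ∈ Complex.slitPlane := fun z hz => Or.inl (by
    have hz : z.re < 1 := hz
    simpa using hz)
  have hf : AnalyticOnNhd ℂ (complexMGF id (gammaMeasure a 1)) U :=
    analyticOnNhd_complexMGF.mono fun z hz =>
      interior_maximal (Iio_subset_integrableExpSet_gammaMeasure ha) isOpen_Iio hz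
  have hg : AnalyticOnNhd ℂ (fun z : ℂ => (1 - z) ^ (-(a : ℂ))) U :=
    DifferentiableOn.analyticOnNhd (fun z hz =>
      ((differentiableAt_id.const_sub (1 : ℂ)).cpow_const (hU z hz)).differentiableWithinAt) hUo
  have hreal : ∀ x : ℝ, x < 1 →
      complexMGF id (gammaMeasure a 1) x = (1 - (x : ℂ)) ^ (-(a : ℂ)) := by
    intro x hx
    rw [complexMGF_ofReal, mgf_gammaMeasure_one ha hx, Complex.ofReal_cpow (sub_pos.2 hx).le]
    push_cast
    rfl
  have hfreq : ∃ᶠ z in nhdsWithin (0 : ℂ) {0}ᶜ,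
      complexMGF id (gammaMeasure a 1) z = (1 - z) ^ (-(a : ℂ)) := by
    have h1 : Tendsto (fun x : ℝ => (x : ℂ)) (nhdsWithin 0 {0}ᶜ) (nhdsWithin 0 {0}ᶜ) := by
      refine tendsto_nhdsWithin_iff.2 ⟨?_, ?_⟩
      · exact (Complex.continuous_ofReal.tendsto' 0 0 (by simp)).mono_left nhdsWithin_le_nhds
      · filter_upwards [self_mem_nhdsWithin] with x hx
        simpa using hx
    refine h1.frequently (Eventually.frequently ?_)
    filter_upwards [nhdsWithin_le_nhds (Iio_mem_nhds (zero_lt_one' ℝ))] with x hx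
    exact hreal x hx
  rw [← complexMGF_id_mul_I]
  exact hf.eqOn_of_preconnected_of_frequently_eq hg hUc (z₀ := 0) (by simp [U]) hfreq
    (show t * Complex.I ∈ U by simp [U])

/-- The characteristic function at `s` of the difference of independent `Gamma(a)` and
`Gamma(a + 1/2)` variables: the conjugate factors `(1 ∓ is)^(-a)` combine to the real number
`(1 + s²)^(-a)`. -/
lemma charFun_mul_gammaMeasure {a : ℝ} (ha : 0 < a) (s : ℝ) :
    charFun (gammaMeasure a 1) s * charFun (gammaMeasure (a + 1 / 2) 1) (-s)
      = ((1 + s ^ 2) ^ (-a) : ℝ) * (1 + s * Complex.I) ^ (-(1 / 2) : ℂ) := by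
  have hne : (1 + s * Complex.I : ℂ) ≠ 0 := fun h => by
    have := congrArg Complex.re h
    simp at this
  have harg : (1 + s * Complex.I : ℂ).arg ≠ π :=
    Complex.mem_slitPlane_iff_arg.1 (Or.inl (by simp)) |>.1
  have hconj : (starRingEnd ℂ) (1 + s * Complex.I) = 1 - s * Complex.I := by
    simp [sub_eq_add_neg]
  have hmul : (1 - s * Complex.I : ℂ) ^ (-(a : ℂ)) * (1 + s * Complex.I) ^ (-(a : ℂ))
      = ((1 + s ^ 2) ^ (-a) : ℝ) := by
    have h := Complex.conj_cpow (1 + s * Complex.I) (-(a : ℂ)) harg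
    rw [map_neg, Complex.conj_ofReal, hconj] at h
    rw [h, mul_comm, Complex.mul_conj, Complex.normSq_eq_norm_sq, ← Complex.ofReal_neg,
      Complex.norm_cpow_real, ← rpow_natCast, ← rpow_mul (norm_nonneg _), mul_comm (-a),
      rpow_mul (norm_nonneg _), rpow_natCast, ← Complex.normSq_eq_norm_sq]
    simp [Complex.normSq_apply, sq]
  rw [charFun_gammaMeasure_one ha, charFun_gammaMeasure_one (by positivity), ← hmul]
  push_cast
  rw [neg_mul, sub_neg_eq_add, neg_add, Complex.cpow_add _ _ hne]
  ring

lemma tendsto_charFun_limit (t : ℝ) :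
    Tendsto (fun k : ℕ => (((1 + (2 / √k * t) ^ 2) ^ (-((k : ℝ) / 2)) : ℝ) : ℂ)
        * (1 + (2 / √k * t : ℝ) * Complex.I) ^ (-(1 / 2) : ℂ))
      atTop (nhds (charFun (gaussianReal 0 4) t)) := by
  have h1 : Tendsto (fun k : ℕ => (1 + (2 / √k * t) ^ 2) ^ (-((k : ℝ) / 2))) atTop
      (nhds (exp (-(2 * t ^ 2)))) := by
    have h := ((tendsto_one_add_div_pow_exp (4 * t ^ 2)).rpow_const (p := -(1 / 2 : ℝ))
      (Or.inl (exp_pos _).ne'))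
    rw [← exp_mul] at h
    convert h using 2 with k
    · rw [← rpow_natCast (1 + 4 * t ^ 2 / (k : ℝ)) k, ← rpow_mul (by positivity), mul_pow,
        div_pow, sq_sqrt (by positivity)]
      congr 1 <;> ring
    · ring_nf
  have h0 : Tendsto (fun k : ℕ => 2 / √k * t) atTop (nhds 0) := by
    rw [← zero_mul t]
    exact (tendsto_const_nhds.div_atTop
      (tendsto_sqrt_atTop.comp tendsto_natCast_atTop_atTop)).mul_const t
  have h2 : Tendsto (fun k : ℕ => (1 + (2 / √k * t : ℝ) * Complex.I) ^ (-(1 / 2) : ℂ)) atTop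
      (nhds 1) := by
    have hc : ContinuousAt (fun s : ℝ => (1 + s * Complex.I) ^ (-(1 / 2) : ℂ)) 0 := by
      refine ContinuousAt.cpow (by fun_prop) continuousAt_const (Or.inl (by simp))
    have := hc.tendsto.comp h0
    simpa [Function.comp_def] using this
  have h := ((Complex.continuous_ofReal.tendsto _).comp h1).mul h2
  convert h using 1
  · rfl
  rw [charFun_gaussianReal, mul_one, Complex.ofReal_exp]
  congr 2
  push_cast
  ring

/-- The mean square deviation from `1` of `(2 / k) η'` for `η'` of law `Gamma((k + 1) / 2)`. -/
lemma integral_sq_scaled_gamma {k : ℕ} (hk : 1 ≤ k) :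
    Integrable (fun x : ℝ => (2 / k * x - 1) ^ 2) (gammaMeasure (((k : ℝ) + 1) / 2) 1) ∧
    ∫ x, (2 / k * x - 1) ^ 2 ∂gammaMeasure (((k : ℝ) + 1) / 2) 1
      = (2 * (k : ℝ) + 3) / (k : ℝ) ^ 2 := by
  have hk' : (0 : ℝ) < k := by exact_mod_cast hk
  set a : ℝ := ((k : ℝ) + 1) / 2 with ha_def
  have ha : 0 < a := by positivity
  have : IsProbabilityMeasure (gammaMeasure a 1) :=
    isProbabilityMeasure_gammaMeasure ha one_pos
  have i1 : Integrable (fun x : ℝ => x) (gammaMeasure a 1) := by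
    simpa using integrable_pow_gammaMeasure_one ha 1
  have i2 := integrable_pow_gammaMeasure_one ha 2
  have e1 : ∫ x, x ∂gammaMeasure a 1 = a := by
    have := integral_pow_gammaMeasure_one ha 1
    have hG := (Gamma_pos_of_pos ha).ne'
    simp only [pow_one, Nat.cast_one, Gamma_add_one ha.ne'] at this
    rw [this]
    field_simp
  have e2 : ∫ x, x ^ 2 ∂gammaMeasure a 1 = a * (a + 1) := by
    have hG := (Gamma_pos_of_pos ha).ne'
    rw [integral_pow_gammaMeasure_one ha 2, Nat.cast_ofNat, show a + 2 = (a + 1) + 1 by ring,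
      Gamma_add_one (by positivity), Gamma_add_one ha.ne']
    field_simp
  have hexp : (fun x : ℝ => (2 / (k : ℝ) * x - 1) ^ 2)
      = fun x => (2 / (k : ℝ)) ^ 2 * x ^ 2 - 2 * (2 / k) * x + 1 := by
    funext x
    ring
  have j2 := i2.const_mul ((2 / (k : ℝ)) ^ 2)
  have j1 := i1.const_mul (2 * (2 / (k : ℝ)))
  simp only [hexp]
  refine ⟨(j2.sub j1).add (integrable_const 1), ?_⟩
  rw [integral_add (f := fun x : ℝ => (2 / (k : ℝ)) ^ 2 * x ^ 2 - 2 * (2 / k) * x) (j2.sub j1)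
    (integrable_const 1), integral_sub j2 j1, integral_const_mul,
    integral_const_mul, e1, e2]
  simp only [integral_const, probReal_univ, smul_eq_mul, ha_def]
  field_simp
  ring

lemma tendstoInMeasure_inv_scaled {Ω : Type*} [MeasurableSpace Ω] (μ : Measure Ω)
    [IsProbabilityMeasure μ] (η' : ℕ → Ω → ℝ) (hη'm : ∀ k, Measurable (η' k))
    (hη'law : ∀ k, 1 ≤ k → μ.map (η' k) = gammaMeasure (((k : ℝ) + 1) / 2) 1) :
    TendstoInMeasure μ (fun (k : ℕ) ω => (2 / (k : ℝ) * η' k ω)⁻¹) atTop (fun _ => (1 : ℝ)) := by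
  rw [tendstoInMeasure_iff_measureReal_norm]
  intro ε hε
  -- if `|w - 1| < δ` then `w > 1 / 2`, so `|w⁻¹ - 1| = |w - 1| / w < 2δ ≤ ε`
  set δ : ℝ := min (1 / 2) (ε / 2) with hδ_def
  have hδ : 0 < δ := by positivity
  have hlim : Tendsto (fun k : ℕ => (2 * (k : ℝ) + 3) / (k : ℝ) ^ 2 / δ ^ 2) atTop (nhds 0) := by
    have h1 : Tendsto (fun k : ℕ => (k : ℝ)⁻¹) atTop (nhds 0) :=
      tendsto_inv_atTop_zero.comp tendsto_natCast_atTop_atTop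
    have h2 : Tendsto (fun k : ℕ => (2 * (k : ℝ)⁻¹ + 3 * (k : ℝ)⁻¹ ^ 2) / δ ^ 2) atTop
        (nhds ((2 * 0 + 3 * 0 ^ 2) / δ ^ 2)) :=
      ((h1.const_mul 2).add ((h1.pow 2).const_mul 3)).div_const _
    refine Tendsto.congr' ?_ (by simpa using h2)
    filter_upwards [eventually_ge_atTop 1] with k hk
    have : (0 : ℝ) < k := by exact_mod_cast hk
    field_simp
  refine squeeze_zero' (Eventually.of_forall fun k => measureReal_nonneg) ?_ hlim
  filter_upwards [eventually_ge_atTop 1] with k hk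
  obtain ⟨hint, heq⟩ := integral_sq_scaled_gamma hk
  have hg : Measurable fun x : ℝ => (2 / (k : ℝ) * x - 1) ^ 2 := by fun_prop
  rw [← hη'law k hk] at hint heq
  rw [integral_map (hη'm k).aemeasurable hg.aestronglyMeasurable] at heq
  have hmarkov := mul_meas_ge_le_integral_of_nonneg (ae_of_all _ fun ω => sq_nonneg _)
    (hint.comp_measurable (hη'm k)) (δ ^ 2)
  rw [heq] at hmarkov
  rw [le_div_iff₀ (by positivity), mul_comm]
  refine le_trans (mul_le_mul_of_nonneg_left (measureReal_mono fun ω hω => ?_) (by positivity))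
    hmarkov
  set w : ℝ := 2 / (k : ℝ) * η' k ω
  have hω : ε ≤ |w⁻¹ - 1| := hω
  change δ ^ 2 ≤ (w - 1) ^ 2
  rw [← sq_abs (w - 1)]
  refine pow_le_pow_left₀ hδ.le ?_ 2
  by_contra! hlt
  obtain ⟨hlt1, hlt2⟩ := lt_min_iff.1 hlt
  have hw : 1 / 2 < w := by linarith [(abs_lt.1 hlt1).1]
  have hw0 : 0 < w := by linarith
  have : |w⁻¹ - 1| < ε := by
    rw [show w⁻¹ - 1 = -(w - 1) / w by field_simp; ring, abs_div, abs_neg, abs_of_pos hw0,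
      div_lt_iff₀ hw0]
    nlinarith
  linarith

lemma tendstoInDistribution_difference {Ω : Type*} [MeasurableSpace Ω] (μ : Measure Ω)
    [IsProbabilityMeasure μ] (η η' : ℕ → Ω → ℝ)
    (hηm : ∀ k, Measurable (η k)) (hη'm : ∀ k, Measurable (η' k))
    (hηlaw : ∀ k, 1 ≤ k → μ.map (η k) = gammaMeasure ((k : ℝ) / 2) 1)
    (hη'law : ∀ k, 1 ≤ k → μ.map (η' k) = gammaMeasure (((k : ℝ) + 1) / 2) 1)
    (hindep : ∀ k, 1 ≤ k → IndepFun (η k) (η' k) μ) :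
    TendstoInDistribution (fun (k : ℕ) ω => 2 / √k * (η k ω - η' k ω)) atTop (id : ℝ → ℝ)
      (fun _ => μ) (gaussianReal 0 4) where
  forall_aemeasurable k := (((hηm k).sub (hη'm k)).const_mul _).aemeasurable
  tendsto := by
    refine ProbabilityMeasure.tendsto_iff_tendsto_charFun.2 fun t => ?_
    simp only [ProbabilityMeasure.coe_mk, Measure.map_id]
    refine (tendsto_charFun_limit t).congr' ?_
    filter_upwards [eventually_ge_atTop 1] with k hk
    have hk' : (0 : ℝ) < k := by exact_mod_cast hk
    have hI : IndepFun (η k) (fun ω => -1 * η' k ω) μ :=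
      (hindep k hk).comp measurable_id (measurable_const_mul (-1))
    have hsum := hI.charFun_map_fun_add_eq_mul (hηm k).aemeasurable
      ((hη'm k).const_mul (-1)).aemeasurable
    have hsub : (fun ω => η k ω - η' k ω) = fun ω => η k ω + -1 * η' k ω := by
      funext ω
      ring
    rw [charFun_map_mul_comp (f := fun ω => η k ω - η' k ω)
      ((hηm k).sub (hη'm k)).aemeasurable, hsub, hsum, Pi.mul_apply,
      charFun_map_mul_comp (hη'm k).aemeasurable, hηlaw k hk, hη'law k hk, neg_one_mul,
      add_div, charFun_mul_gammaMeasure (by positivity)]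

theorem ratio_clt {Ω : Type*} [MeasurableSpace Ω] (μ : Measure Ω)
    [IsProbabilityMeasure μ] (η η' : ℕ → Ω → ℝ)
    (hηm : ∀ k, Measurable (η k)) (hη'm : ∀ k, Measurable (η' k))
    (hηlaw : ∀ k, 1 ≤ k → μ.map (η k) = gammaMeasure ((k : ℝ) / 2) 1)
    (hη'law : ∀ k, 1 ≤ k → μ.map (η' k) = gammaMeasure (((k : ℝ) + 1) / 2) 1)
    (hindep : ∀ k, 1 ≤ k → IndepFun (η k) (η' k) μ) :
    ∀ f : BoundedContinuousFunction ℝ ℝ,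
      Tendsto (fun k : ℕ =>
          ∫ x, f x ∂(μ.map (fun ω => Real.sqrt k * (η k ω / η' k ω - 1))))
        atTop (nhds (∫ x, f x ∂(gaussianReal 0 4))) := by
  intro f
  have hslutsky :=
    (tendstoInDistribution_difference μ η η' hηm hη'm hηlaw hη'law
      hindep).continuous_comp_prodMk_of_tendstoInMeasure_const
      (g := fun p : ℝ × ℝ => p.1 * p.2) (by fun_prop)
      (tendstoInMeasure_inv_scaled μ η' hη'm hη'law)
      (fun k => (((hη'm k).const_mul _).inv).aemeasurable)
  have h := ProbabilityMeasure.tendsto_iff_forall_integral_tendsto.1 hslutsky.tendsto f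
  simp only [ProbabilityMeasure.coe_mk, id, mul_one, Measure.map_id'] at h
  refine h.congr' ?_
  filter_upwards [eventually_ge_atTop 1] with k hk
  have hk' : (0 : ℝ) < k := by exact_mod_cast hk
  have hne : ∀ᵐ ω ∂μ, η' k ω ≠ 0 := by
    refine ae_of_ae_map (hη'm k).aemeasurable (p := fun x => x ≠ 0) ?_
    rw [hη'law k hk, gammaMeasure]
    exact (withDensity_absolutelyContinuous _ _).ae_le (Measure.ae_ne volume 0)
  congr 1
  refine Measure.map_congr ?_
  filter_upwards [hne] with ω hω
  have hs : √(k : ℝ) ≠ 0 := (sqrt_pos.2 hk').ne'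
  have hsq : √(k : ℝ) ^ 2 = k := sq_sqrt hk'.le
  field_simp
  rw [hsq, mul_comm]
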